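/- (Accuracy decreases as γ increases) Let p be a probability measure on a measurable space Z and let ℓ : Z → ℝ be measurable with constants 0 < c ≤ ℓ(z) ≤ C for all z. For β > 0 let q^{(β)} denote the probability measure with density z ↦ ℓ(z)^{β} / ∫ ℓ^{β} dp with respect to p. Then for all 0 < β₁ ≤ β₂, the expected log-likelihood is monotone: ∫ log ℓ dq^{(β₁)} ≤ ∫ log ℓ dq^{(β₂)}. Equivalently, writing β = 1/γ, the average accuracy E_{q_γ*}[log ℓ] of the power posterior q_γ*(z) ∝ p(z) ℓ(z)^{1/γ} is non-increasing in γ. -/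

import Mathlib

open MeasureTheory ProbabilityTheory

/-!
Write `fᵢ = ℓ ^ βᵢ / ∫ ℓ ^ βᵢ dp` for the two densities. Since
`log f₂ - log f₁ = (β₂ - β₁) log ℓ - κ` for a constant `κ`, monotonicity of `log` gives the pointwise
bound `0 ≤ ((β₂ - β₁) log ℓ - κ) (f₂ - f₁)`. Both densities have integral one, so integrating
removes `κ` and leaves `0 ≤ (β₂ - β₁) (∫ log ℓ dq₂ - ∫ log ℓ dq₁)`; when `β₁ < β₂` the factor
`β₂ - β₁` can be cancelled.
-/

lemma integrable_rpow_of_bounds {Z : Type*} [MeasurableSpace Z]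
    (p : Measure Z) [IsProbabilityMeasure p] {ℓ : Z → ℝ} (hℓ : Measurable ℓ)
    {c C : ℝ} (hc : 0 < c) (hlb : ∀ z, c ≤ ℓ z) (hub : ∀ z, ℓ z ≤ C) {β : ℝ} (hβ : 0 < β) :
    Integrable (fun z => ℓ z ^ β) p := by
  refine Integrable.of_bound (hℓ.pow_const β).aestronglyMeasurable (C ^ β) (ae_of_all _ fun z => ?_)
  have h0 : 0 ≤ ℓ z := hc.le.trans (hlb z)
  rw [Real.norm_of_nonneg (Real.rpow_nonneg h0 β)]
  exact Real.rpow_le_rpow h0 (hub z) hβ.le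

lemma integral_rpow_pos_of_bounds {Z : Type*} [MeasurableSpace Z]
    (p : Measure Z) [IsProbabilityMeasure p] {ℓ : Z → ℝ} (hℓ : Measurable ℓ)
    {c C : ℝ} (hc : 0 < c) (hlb : ∀ z, c ≤ ℓ z) (hub : ∀ z, ℓ z ≤ C) {β : ℝ} (hβ : 0 < β) :
    0 < ∫ z, ℓ z ^ β ∂p := by
  have h : ∫ _, c ^ β ∂p ≤ ∫ z, ℓ z ^ β ∂p :=
    integral_mono (integrable_const _) (integrable_rpow_of_bounds p hℓ hc hlb hub hβ)
      fun z => Real.rpow_le_rpow hc.le (hlb z) hβ.le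
  rw [integral_const, probReal_univ, one_smul] at h
  exact (Real.rpow_pos_of_pos hc β).trans_le h

lemma integral_withDensity_ofReal {Z : Type*} [MeasurableSpace Z]
    (p : Measure Z) {f : Z → ℝ} (hf : Measurable f) (hf0 : ∀ z, 0 ≤ f z) (g : Z → ℝ) :
    ∫ z, g z ∂(p.withDensity fun z => ENNReal.ofReal (f z)) = ∫ z, f z * g z ∂p := by
  rw [integral_withDensity_eq_integral_toReal_smul hf.ennreal_ofReal
    (ae_of_all _ fun _ => ENNReal.ofReal_lt_top)]
  simp only [ENNReal.toReal_ofReal (hf0 _), smul_eq_mul]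

/-- **Accuracy decreases as γ increases.**  Let `p` be a probability measure and `ℓ` a
measurable likelihood with `0 < c ≤ ℓ ≤ C`.  For `β > 0`, let `q^(β)` be the tilted
probability measure with density `ℓ^β / ∫ ℓ^β dp` with respect to `p`.  Then for
`0 < β₁ ≤ β₂` the expected log-likelihood is monotone:
`∫ log ℓ dq^(β₁) ≤ ∫ log ℓ dq^(β₂)`.  Writing `β = 1/γ`, the average accuracy of the power
posterior `q_γ*(z) ∝ p(z) ℓ(z)^{1/γ}` is non-increasing in `γ`. -/
theorem integral_log_tilted_mono {Z : Type*} [MeasurableSpace Z]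
    (p : Measure Z) [IsProbabilityMeasure p]
    (ℓ : Z → ℝ) (hℓ : Measurable ℓ)
    (c C : ℝ) (hc : 0 < c) (hlb : ∀ z, c ≤ ℓ z) (hub : ∀ z, ℓ z ≤ C)
    (β₁ β₂ : ℝ) (hβ₁ : 0 < β₁) (hβ : β₁ ≤ β₂) :
    ∫ z, Real.log (ℓ z)
        ∂(p.withDensity fun z => ENNReal.ofReal (ℓ z ^ β₁ / ∫ w, ℓ w ^ β₁ ∂p))
      ≤ ∫ z, Real.log (ℓ z)
        ∂(p.withDensity fun z => ENNReal.ofReal (ℓ z ^ β₂ / ∫ w, ℓ w ^ β₂ ∂p)) := by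
  rcases hβ.eq_or_lt with rfl | hlt
  · exact le_rfl
  have hβ₂ : 0 < β₂ := hβ₁.trans hlt
  have hpos : ∀ z, 0 < ℓ z := fun z => hc.trans_le (hlb z)
  have hI₁ := integrable_rpow_of_bounds p hℓ hc hlb hub hβ₁
  have hI₂ := integrable_rpow_of_bounds p hℓ hc hlb hub hβ₂
  have hZ₁ := integral_rpow_pos_of_bounds p hℓ hc hlb hub hβ₁
  have hZ₂ := integral_rpow_pos_of_bounds p hℓ hc hlb hub hβ₂
  have hone₁ : ∫ z, ℓ z ^ β₁ / (∫ w, ℓ w ^ β₁ ∂p) ∂p = 1 := by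
    rw [integral_div, div_self hZ₁.ne']
  have hone₂ : ∫ z, ℓ z ^ β₂ / (∫ w, ℓ w ^ β₂ ∂p) ∂p = 1 := by
    rw [integral_div, div_self hZ₂.ne']
  generalize (∫ w, ℓ w ^ β₁ ∂p) = Z₁ at *
  generalize (∫ w, ℓ w ^ β₂ ∂p) = Z₂ at *
  have hf₁ : ∀ z, 0 < ℓ z ^ β₁ / Z₁ := fun z => div_pos (Real.rpow_pos_of_pos (hpos z) _) hZ₁
  have hf₂ : ∀ z, 0 < ℓ z ^ β₂ / Z₂ := fun z => div_pos (Real.rpow_pos_of_pos (hpos z) _) hZ₂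
  rw [integral_withDensity_ofReal p ((hℓ.pow_const β₁).div_const Z₁) (fun z => (hf₁ z).le),
    integral_withDensity_ofReal p ((hℓ.pow_const β₂).div_const Z₂) (fun z => (hf₂ z).le)]
  have hlog : ∀ᵐ z ∂p, ‖Real.log (ℓ z)‖ ≤ max |Real.log c| |Real.log C| :=
    ae_of_all _ fun z => abs_le_max_abs_abs (Real.log_le_log hc (hlb z))
      (Real.log_le_log (hpos z) (hub z))
  have hJ₁ : Integrable (fun z => ℓ z ^ β₁ / Z₁) p := hI₁.div_const Z₁
  have hJ₂ : Integrable (fun z => ℓ z ^ β₂ / Z₂) p := hI₂.div_const Z₂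
  have hL₁ : Integrable (fun z => ℓ z ^ β₁ / Z₁ * Real.log (ℓ z)) p :=
    hJ₁.mul_bdd hℓ.log.aestronglyMeasurable hlog
  have hL₂ : Integrable (fun z => ℓ z ^ β₂ / Z₂ * Real.log (ℓ z)) p :=
    hJ₂.mul_bdd hℓ.log.aestronglyMeasurable hlog
  -- the left factor is `log f₂ - log f₁`, so it has the same sign as `f₂ - f₁`
  have key : ∀ z, 0 ≤ ((β₂ - β₁) * Real.log (ℓ z) - (Real.log Z₂ - Real.log Z₁)) *
      (ℓ z ^ β₂ / Z₂ - ℓ z ^ β₁ / Z₁) := by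
    intro z
    have e : ∀ β K : ℝ, 0 < K → Real.log (ℓ z ^ β / K) = β * Real.log (ℓ z) - Real.log K :=
      fun β K hK => by
        rw [Real.log_div (Real.rpow_pos_of_pos (hpos z) β).ne' hK.ne', Real.log_rpow (hpos z)]
    have e₁ := e β₁ Z₁ hZ₁
    have e₂ := e β₂ Z₂ hZ₂
    rcases le_total (ℓ z ^ β₁ / Z₁) (ℓ z ^ β₂ / Z₂) with h | h
    · have := Real.log_le_log (hf₁ z) h
      exact mul_nonneg (by linarith) (by linarith)
    · have := Real.log_le_log (hf₂ z) h
      exact mul_nonneg_of_nonpos_of_nonpos (by linarith) (by linarith)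
  have hint : ∫ z, ((β₂ - β₁) * Real.log (ℓ z) - (Real.log Z₂ - Real.log Z₁)) *
      (ℓ z ^ β₂ / Z₂ - ℓ z ^ β₁ / Z₁) ∂p =
      (β₂ - β₁) * (∫ z, ℓ z ^ β₂ / Z₂ * Real.log (ℓ z) ∂p -
        ∫ z, ℓ z ^ β₁ / Z₁ * Real.log (ℓ z) ∂p) := by
    calc _ = ∫ z, ((β₂ - β₁) * (ℓ z ^ β₂ / Z₂ * Real.log (ℓ z) - ℓ z ^ β₁ / Z₁ * Real.log (ℓ z)) -
          (Real.log Z₂ - Real.log Z₁) * (ℓ z ^ β₂ / Z₂ - ℓ z ^ β₁ / Z₁)) ∂p := by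
          congr 1 with z
          ring
      _ = _ := by
          rw [integral_sub, integral_const_mul, integral_const_mul, integral_sub hL₂ hL₁, integral_sub hJ₂ hJ₁,
            hone₁, hone₂, sub_self, mul_zero, sub_zero]
          · exact (hL₂.sub hL₁).const_mul _
          · exact (hJ₂.sub hJ₁).const_mul _
  have hnonneg := hint ▸ integral_nonneg (μ := p) key
  exact sub_nonneg.1 (nonneg_of_mul_nonneg_right hnonneg (sub_pos.2 hlt))
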